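/- arXiv:2003.05876 — 3 statements merged into one kernel-verified Lean document; each statement's English description precedes it below -/
import Mathlib

section
/- For every integer N ≥ 1, Q_BH⁻¹ · H_BH(1) · Q_BH = J; i.e. the exceptional-point Bose–Hubbard Hamiltonian H_BH(1) is similar, via the explicit transition matrix Q_BH, to the nilpotent Jordan block J. -/
/-!
The identity is proved as `H_BH(1) · Q = Q · J` together with invertibility of `Q = Q_BH`.

Write `n = N − 1`, `a = n − m`. Since the weights `√(binom(n,m))` turn the couplings into the integers
`n − m` and `m` (`gCoup_mul_sqrt_succ`, `gCoup_mul_sqrt`), the `(m, q)` entry of `H Q = Q J` reduces,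
after removing the common factors, to
`(a − m)·binom(a,q) − a·binom(a−1,q) + m·binom(a+1,q) = (n − q + 1)·binom(a,q−1)`,
which follows from Pascal's rule (`pascal_zero`, `pascal_succ`). The matrix `Q` is invertible because
`D` and `G` are diagonal with nonzero entries and `P` is a row reversal of the lower unitriangular
Pascal matrix.
-/

open Matrix Polynomial Finset

/-- off-diagonal coupling `√((N−1−k)(k+1))`. -/
noncomputable def gCoup (N k : ℕ) : ℝ := Real.sqrt (((N - 1 - k) * (k + 1) : ℕ))

/-- the non-Hermitian Bose–Hubbard Hamiltonian `H_BH(z)`. -/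
noncomputable def HBH (N : ℕ) (z : ℂ) : Matrix (Fin N) (Fin N) ℂ :=
  fun k l =>
    if (k : ℕ) = (l : ℕ) then -Complex.I * (((N : ℤ) - 1 - 2 * (k : ℕ) : ℤ) : ℂ) * z
    else if (l : ℕ) = (k : ℕ) + 1 then (gCoup N k : ℂ)
    else if (k : ℕ) = (l : ℕ) + 1 then (gCoup N l : ℂ)
    else 0

/-- the EP limit of the discrete anharmonic-oscillator Hamiltonian `H_AO`. -/
noncomputable def HAO (N : ℕ) : Matrix (Fin N) (Fin N) ℂ :=
  fun k l =>
    if (k : ℕ) = (l : ℕ) then -(((N : ℤ) - 1 - 2 * (k : ℕ) : ℤ) : ℂ)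
    else if (l : ℕ) = (k : ℕ) + 1 then (gCoup N k : ℂ)
    else if (k : ℕ) = (l : ℕ) + 1 then -(gCoup N l : ℂ)
    else 0

/-- the nilpotent Jordan block `J`. -/
noncomputable def Jmat (N : ℕ) : Matrix (Fin N) (Fin N) ℂ :=
  fun k l => if (l : ℕ) = (k : ℕ) + 1 then 1 else 0

/-- the Pascal-triangle matrix `P`. -/
noncomputable def Pmat (N : ℕ) : Matrix (Fin N) (Fin N) ℂ :=
  fun m q => ((N - 1 - (m : ℕ)).choose (q : ℕ) : ℂ)

/-- the diagonal factor `D` with `D_{k,k} = i^k·√(binom(N−1,k))`. -/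
noncomputable def Dmat (N : ℕ) : Matrix (Fin N) (Fin N) ℂ :=
  Matrix.diagonal fun k => Complex.I ^ (k : ℕ) * (Real.sqrt ((N - 1).choose (k : ℕ)) : ℂ)

/-- the diagonal factor `G` with `G_{k,k} = (−i)^{N−1−k}·(N−1−k)!`. -/
noncomputable def Gmat (N : ℕ) : Matrix (Fin N) (Fin N) ℂ :=
  Matrix.diagonal fun k => (-Complex.I) ^ (N - 1 - (k : ℕ)) * ((N - 1 - (k : ℕ)).factorial : ℂ)

/-- the Bose–Hubbard transition matrix `Q_BH = D·P·G`. -/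
noncomputable def QBH (N : ℕ) : Matrix (Fin N) (Fin N) ℂ := Dmat N * Pmat N * Gmat N

/-- the diagonal factor `C` with `C_{k,k} = √(binom(N−1,k))`. -/
noncomputable def Cmat (N : ℕ) : Matrix (Fin N) (Fin N) ℂ :=
  Matrix.diagonal fun k => (Real.sqrt ((N - 1).choose (k : ℕ)) : ℂ)

/-- the diagonal factor `F` with `F_{k,k} = (−1)^{N−1−k}·(N−1−k)!`. -/
noncomputable def Fmat (N : ℕ) : Matrix (Fin N) (Fin N) ℂ :=
  Matrix.diagonal fun k => (-1 : ℂ) ^ (N - 1 - (k : ℕ)) * ((N - 1 - (k : ℕ)).factorial : ℂ)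

/-- the anharmonic-oscillator transition matrix `Q_AO = C·P·F`. -/
noncomputable def QAO (N : ℕ) : Matrix (Fin N) (Fin N) ℂ := Cmat N * Pmat N * Fmat N

/-- `β = −1 + i`. -/
noncomputable def betaC : ℂ := -1 + Complex.I

/-- the diagonal factor `B` with `B_{k,k} = (−β)^{−k}`. -/
noncomputable def Bmat (N : ℕ) : Matrix (Fin N) (Fin N) ℂ :=
  Matrix.diagonal fun k => ((-betaC) ^ (k : ℕ))⁻¹

/-- the diagonal factor `A` with `A_{k,k} = β^k`. -/
noncomputable def Amat (N : ℕ) : Matrix (Fin N) (Fin N) ℂ :=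
  Matrix.diagonal fun k => betaC ^ (k : ℕ)

/-- the upper-triangular real matrix `R` with
`R_{n,n+q} = √(binom(n+q,n)·binom(N−1−n,q))`. -/
noncomputable def Rmat (N : ℕ) : Matrix (Fin N) (Fin N) ℂ :=
  fun n k =>
    if (n : ℕ) ≤ (k : ℕ) then
      (Real.sqrt (((k : ℕ).choose (n : ℕ)) * ((N - 1 - (n : ℕ)).choose ((k : ℕ) - (n : ℕ)))) : ℂ)
    else 0

/-- the transition-matrix product `S = B·R·A`. -/
noncomputable def Smat (N : ℕ) : Matrix (Fin N) (Fin N) ℂ := Bmat N * Rmat N * Amat N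

/-- the discrete anharmonic-oscillator Hamiltonian `H_AO(γ)` with coupling parameter `γ`. -/
noncomputable def HAOg (N : ℕ) (γ : ℝ) : Matrix (Fin N) (Fin N) ℝ :=
  fun k l =>
    if (k : ℕ) = (l : ℕ) then -((N : ℝ) - 1 - 2 * (k : ℕ))
    else if (l : ℕ) = (k : ℕ) + 1 then
      Real.sqrt ((((N - 1 - (k : ℕ)) * ((k : ℕ) + 1) : ℕ)) * (1 - γ))
    else if (k : ℕ) = (l : ℕ) + 1 then
      -Real.sqrt ((((N - 1 - (l : ℕ)) * ((l : ℕ) + 1) : ℕ)) * (1 - γ))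
    else 0

/-- the exchange (parity) matrix `Π`. -/
noncomputable def PiMat (N : ℕ) : Matrix (Fin N) (Fin N) ℂ :=
  fun k l => if (k : ℕ) + (l : ℕ) = N - 1 then 1 else 0

theorem gCoup_mul_sqrt_succ (n k : ℕ) :
    gCoup (n + 1) k * √(n.choose (k + 1) : ℝ) = ((n - k : ℕ) : ℝ) * √(n.choose k : ℝ) := by
  have h : (n - k) * (k + 1) * n.choose (k + 1) = (n - k) ^ 2 * n.choose k := by
    have := Nat.choose_succ_right_eq n k
    calc (n - k) * (k + 1) * n.choose (k + 1) = (n - k) * (n.choose (k + 1) * (k + 1)) := by ring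
      _ = _ := by rw [this]; ring
  rw [gCoup, Nat.add_sub_cancel, ← Real.sqrt_mul (Nat.cast_nonneg _), ← Nat.cast_mul, h,
    Nat.cast_mul, Nat.cast_pow, Real.sqrt_mul (by positivity), Real.sqrt_sq (Nat.cast_nonneg _)]

theorem gCoup_mul_sqrt (n k : ℕ) :
    gCoup (n + 1) k * √(n.choose k : ℝ) = ((k + 1 : ℕ) : ℝ) * √(n.choose (k + 1) : ℝ) := by
  have h : (n - k) * (k + 1) * n.choose k = (k + 1) ^ 2 * n.choose (k + 1) := by
    have := Nat.choose_succ_right_eq n k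
    calc (n - k) * (k + 1) * n.choose k = (k + 1) * (n.choose k * (n - k)) := by ring
      _ = _ := by rw [← this]; ring
  rw [gCoup, Nat.add_sub_cancel, ← Real.sqrt_mul (Nat.cast_nonneg _), ← Nat.cast_mul, h,
    Nat.cast_mul, Nat.cast_pow, Real.sqrt_mul (by positivity), Real.sqrt_sq (Nat.cast_nonneg _)]

/-- The entry of `Q_BH` for `N = n + 1`, as a function of natural-number indices. -/
noncomputable def qEntry (n m q : ℕ) : ℂ :=
  Complex.I ^ m * (√(n.choose m : ℝ) : ℂ) * ((n - m).choose q : ℂ) *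
    ((-Complex.I) ^ (n - q) * ((n - q).factorial : ℂ))

theorem QBH_apply (n : ℕ) (m q : Fin (n + 1)) : QBH (n + 1) m q = qEntry n m q := by
  simp [QBH, Dmat, Gmat, Pmat, qEntry, Matrix.mul_diagonal, Matrix.diagonal_mul]

/-- The action of `H_BH(1)` on a vector. No boundary case is needed at `k = n`, where the coupling
`gCoup (n + 1) n` vanishes; at `k = 0` the lower neighbour is absent. -/
theorem HBH_row (n : ℕ) (k : Fin (n + 1)) (f : ℕ → ℂ) :
    ∑ l, HBH (n + 1) 1 k l * f l =
      -Complex.I * ((n : ℂ) - 2 * (k : ℕ)) * f k + (gCoup (n + 1) k : ℂ) * f (k + 1) +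
        (if (k : ℕ) = 0 then 0 else (gCoup (n + 1) (k - 1) : ℂ) * f (k - 1)) := by
  let F : ℕ → ℂ := fun l =>
      (if l = k then -Complex.I * ((n : ℂ) - 2 * (k : ℕ)) * f k else 0) +
        (if l = k + 1 then (gCoup (n + 1) k : ℂ) * f (k + 1) else 0) +
        (if l = k - 1 then
          (if (k : ℕ) = 0 then 0 else (gCoup (n + 1) (k - 1) : ℂ) * f (k - 1)) else 0)
  have hsplit : ∀ l : Fin (n + 1), HBH (n + 1) 1 k l * f l = F l := by
    intro l
    have hk := k.2
    simp only [HBH, F]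
    by_cases h1 : (k : ℕ) = l
    · by_cases h0 : (k : ℕ) = 0
      · simp [← h1, h0]
      · have : (k : ℕ) ≠ k - 1 := by omega
        simp [← h1, this]
    · by_cases h2 : (l : ℕ) = k + 1
      · have : ¬ (k : ℕ) + 1 = k - 1 := by omega
        simp [h2, this]
      · by_cases h3 : (k : ℕ) = l + 1
        · have : ¬ (l : ℕ) = l + 1 + 1 := by omega
          simp [h3, this]
        · have h4 : ¬ ((l : ℕ) = k - 1) := by omega
          have h1' : ¬ ((l : ℕ) = k) := fun h => h1 h.symm
          simp [h1, h1', h2, h3, h4]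
  rw [Finset.sum_congr rfl fun l _ => hsplit l, Fin.sum_univ_eq_sum_range F]
  simp only [F]
  rw [Finset.sum_add_distrib, Finset.sum_add_distrib, Finset.sum_ite_eq', Finset.sum_ite_eq',
    Finset.sum_ite_eq']
  have hk := k.2
  have e1 : (k : ℕ) ∈ Finset.range (n + 1) := Finset.mem_range.2 hk
  have e3 : (k : ℕ) - 1 ∈ Finset.range (n + 1) := Finset.mem_range.2 (by omega)
  rw [if_pos e1, if_pos e3]
  congr 2
  split_ifs with h
  · rfl
  · have hkn : (k : ℕ) = n := by simp at h; omega
    simp [hkn, gCoup]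

theorem Jmat_col (n : ℕ) (q : Fin (n + 1)) (f : ℕ → ℂ) :
    ∑ l, f (l : Fin (n + 1)) * Jmat (n + 1) l q = if (q : ℕ) = 0 then 0 else f (q - 1) := by
  let F : ℕ → ℂ := fun l => if l = q - 1 then (if (q : ℕ) = 0 then 0 else f (q - 1)) else 0
  have hsplit : ∀ l : Fin (n + 1), f l * Jmat (n + 1) l q = F l := by
    intro l
    simp only [Jmat, F]
    by_cases h : (q : ℕ) = l + 1
    · simp [h]
    · by_cases h0 : (q : ℕ) = 0
      · simp [h0]
      · have : ¬ ((l : ℕ) = q - 1) := by omega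
        simp [h, this]
  rw [Finset.sum_congr rfl fun l _ => hsplit l, Fin.sum_univ_eq_sum_range F]
  simp only [F]
  rw [Finset.sum_ite_eq', if_pos (Finset.mem_range.2 (by omega))]

theorem pascal_zero (a m : ℕ) :
    ((a : ℂ) - m) * (a.choose 0 : ℂ) - a * ((a - 1).choose 0 : ℂ) +
      m * ((a + 1).choose 0 : ℂ) = 0 := by
  simp

/-- The entrywise content of `H Q = Q J` away from the first column. If `a < r`, both sides vanish. -/
theorem pascal_succ (a m r : ℕ) :
    ((a : ℂ) - m) * (a.choose (r + 1) : ℂ) - a * ((a - 1).choose (r + 1) : ℂ) +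
      m * ((a + 1).choose (r + 1) : ℂ) = ((a : ℂ) + m - r) * (a.choose r : ℂ) := by
  have h2 : ((a + 1).choose (r + 1) : ℂ) = a.choose r + a.choose (r + 1) := by
    exact_mod_cast Nat.choose_succ_succ a r
  rw [h2]
  rcases a with _ | b
  · rcases r with _ | r <;> simp
  · have h1 : ((b + 1).choose (r + 1) : ℂ) = b.choose r + b.choose (r + 1) := by
      exact_mod_cast Nat.choose_succ_succ b r
    have h3 : ((b : ℂ) + 1) * b.choose r = (b + 1 - r) * (b + 1).choose r := by
      rcases le_or_gt r (b + 1) with hr | hr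
      · have := Nat.choose_mul_succ_eq b r
        have h4 : ((b.choose r * (b + 1) : ℕ) : ℂ) = ((b + 1).choose r * (b + 1 - r) : ℕ) := by
          rw [this]
        push_cast [Nat.cast_sub hr] at h4
        linear_combination h4
      · simp [Nat.choose_eq_zero_of_lt hr, Nat.choose_eq_zero_of_lt (Nat.lt_of_succ_lt hr)]
    simp only [Nat.add_sub_cancel, h1]
    push_cast
    linear_combination h3

/-- The `(m, q)` entry of `H_BH(1) · Q_BH`, with the square root and the powers of `i` collected into
a common factor. -/
theorem threeTerm (n m q : ℕ) (hm : m ≤ n) :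
    -Complex.I * ((n : ℂ) - 2 * m) * qEntry n m q + (gCoup (n + 1) m : ℂ) * qEntry n (m + 1) q +
        (if m = 0 then 0 else (gCoup (n + 1) (m - 1) : ℂ) * qEntry n (m - 1) q) =
      Complex.I ^ m * (√(n.choose m : ℝ) : ℂ) *
        ((-Complex.I) ^ (n - q + 1) * ((n - q).factorial : ℂ)) *
        ((((n - m : ℕ) : ℂ) - m) * ((n - m).choose q : ℂ) -
          ((n - m : ℕ) : ℂ) * ((n - m - 1).choose q : ℂ) + m * ((n - m + 1).choose q : ℂ)) := by
  have hs := congrArg (fun x : ℝ => (x : ℂ)) (gCoup_mul_sqrt_succ n m)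
  simp only [Complex.ofReal_mul, Complex.ofReal_natCast] at hs
  have hlow : (if m = 0 then 0 else (gCoup (n + 1) (m - 1) : ℂ) * qEntry n (m - 1) q) =
      Complex.I ^ m * (√(n.choose m : ℝ) : ℂ) *
        ((-Complex.I) ^ (n - q + 1) * ((n - q).factorial : ℂ)) *
        (m * ((n - m + 1).choose q : ℂ)) := by
    rcases m with _ | k
    · simp
    · have hk := congrArg (fun x : ℝ => (x : ℂ)) (gCoup_mul_sqrt n k)
      simp only [Complex.ofReal_mul, Complex.ofReal_natCast] at hk
      have e : n - (k + 1) + 1 = n - k := by omega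
      rw [if_neg (Nat.succ_ne_zero k), e, qEntry, Nat.add_sub_cancel, pow_succ, pow_succ]
      linear_combination (Complex.I ^ k * ((n - k).choose q : ℂ) *
        ((-Complex.I) ^ (n - q) * ((n - q).factorial : ℂ))) * hk +
        (Complex.I ^ k * ((n - k).choose q : ℂ) *
        ((-Complex.I) ^ (n - q) * ((n - q).factorial : ℂ)) * ((k + 1 : ℕ) : ℂ) *
          (√(n.choose (k + 1) : ℝ) : ℂ)) * Complex.I_mul_I
  have e : n - (m + 1) = n - m - 1 := by omega
  have hc : ((n - m : ℕ) : ℂ) = n - m := by push_cast [Nat.cast_sub hm]; ring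
  rw [hlow, qEntry, qEntry, e, pow_succ, pow_succ]
  rw [hc] at hs ⊢
  linear_combination (Complex.I ^ m * Complex.I * ((n - m - 1).choose q : ℂ) *
        ((-Complex.I) ^ (n - q) * ((n - q).factorial : ℂ))) * hs

theorem HBH_mul_QBH (n : ℕ) : HBH (n + 1) 1 * QBH (n + 1) = QBH (n + 1) * Jmat (n + 1) := by
  ext m q
  have hm : (m : ℕ) ≤ n := Nat.lt_succ_iff.1 m.2
  simp only [Matrix.mul_apply, QBH_apply]
  rw [HBH_row n m (fun l => qEntry n l q), Jmat_col n q (fun l => qEntry n m l),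
    threeTerm n m q hm]
  rcases hq : (q : ℕ) with _ | r
  · rw [pascal_zero]
    simp
  · have hr : r + 1 ≤ n := by omega
    rw [pascal_succ, if_neg (Nat.succ_ne_zero r), Nat.add_sub_cancel, qEntry]
    have e : n - r = n - (r + 1) + 1 := by omega
    have hc : (((n - (r + 1) : ℕ) : ℂ) + 1) = n - r := by push_cast [Nat.cast_sub hr]; ring
    have hc' : ((n - m : ℕ) : ℂ) = n - (m : ℕ) := by push_cast [Nat.cast_sub hm]; ring
    rw [e, Nat.factorial_succ, hc']
    push_cast
    rw [hc]
    ring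

theorem isUnit_det_Pmat (n : ℕ) : IsUnit (Pmat (n + 1)).det := by
  let L : Matrix (Fin (n + 1)) (Fin (n + 1)) ℂ := fun m q => ((m : ℕ).choose q : ℂ)
  have hL : L.det = 1 := by
    rw [Matrix.det_of_isLowerTriangular]
    · simp [L]
    · intro i j hij
      have : (i : ℕ) < j := hij
      simp [L, Nat.choose_eq_zero_of_lt this]
  have hP : Pmat (n + 1) = L.submatrix Fin.revPerm id := by
    ext m q
    have h : ((Fin.revPerm m : Fin (n + 1)) : ℕ) = n + 1 - 1 - m := by
      rw [Fin.revPerm_apply, Fin.val_rev]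
      omega
    change _ = (((Fin.revPerm m : Fin (n + 1)) : ℕ).choose q : ℂ)
    rw [h, Pmat]
  rw [hP, Matrix.det_permute, hL, mul_one]
  exact ((Equiv.Perm.sign _).isUnit).map (Int.castRingHom ℂ)

theorem isUnit_det_QBH (n : ℕ) : IsUnit (QBH (n + 1)).det := by
  rw [QBH, Matrix.det_mul, Matrix.det_mul, Dmat, Gmat, Matrix.det_diagonal, Matrix.det_diagonal]
  refine (IsUnit.mul ?_ (isUnit_det_Pmat n)).mul ?_
  · refine isUnit_iff_ne_zero.2 (Finset.prod_ne_zero_iff.2 fun k _ => ?_)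
    have hk : 0 < (n + 1 - 1).choose (k : ℕ) := Nat.choose_pos (by omega)
    have : √((n + 1 - 1).choose (k : ℕ) : ℝ) ≠ 0 :=
      (Real.sqrt_pos.2 (Nat.cast_pos.2 hk)).ne'
    exact mul_ne_zero (pow_ne_zero _ Complex.I_ne_zero) (Complex.ofReal_ne_zero.2 this)
  · refine isUnit_iff_ne_zero.2 (Finset.prod_ne_zero_iff.2 fun k _ => ?_)
    exact mul_ne_zero (pow_ne_zero _ (neg_ne_zero.2 Complex.I_ne_zero))
      (Nat.cast_ne_zero.2 (Nat.factorial_ne_zero _))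

/-- `Q_BH⁻¹ · H_BH(1) · Q_BH = J`. -/
theorem bh_jordan_form (N : ℕ) (hN : 1 ≤ N) :
    (QBH N)⁻¹ * HBH N 1 * QBH N = Jmat N := by
  obtain ⟨n, rfl⟩ : ∃ n, N = n + 1 := ⟨N - 1, by omega⟩
  rw [Matrix.mul_assoc, HBH_mul_QBH, ← Matrix.mul_assoc,
    Matrix.nonsing_inv_mul _ (isUnit_det_QBH n), Matrix.one_mul]
end

section
/- For every integer N ≥ 1, Q_AO⁻¹ · H_AO · Q_AO = J; i.e. the exceptional-point anharmonic-oscillator Hamiltonian H_AO is similar, via the explicit transition matrix Q_AO, to the nilpotent Jordan block J. -/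
/-!
`Q_AO` is a product of two invertible diagonal matrices with `P`, which becomes lower unitriangular
once its rows are reversed; so it is invertible and the claim amounts to `H_AO Q_AO = Q_AO J`.

With `n = N - 1`, conjugation by `C` turns the square-root couplings into the integers
`n - m` and `m` (`gCoup_mul_sqrt_choose_succ`, `gCoup_mul_sqrt_choose`), and the entry `(m, q)` of
the claim becomes, with `a = n - m`, a three-term relation among `binom(a - 1, q)`, `binom(a, q)` and
`binom(a + 1, q)` (`pascal_three_term`). It follows from Pascal's rule and
`a * binom(a - 1, q - 1) = (a - q + 1) * binom(a, q - 1)`; the factor `-(n - q + 1)` that remains is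
the ratio of two consecutive entries of `F`.
-/

open Matrix Polynomial Finset

/-- Coupling to the next level after the rescaling by `C`. At `m = n` both sides vanish. -/
lemma gCoup_mul_sqrt_choose_succ (n m : ℕ) :
    gCoup (n + 1) m * Real.sqrt (n.choose (m + 1)) = ((n - m : ℕ) : ℝ) * Real.sqrt (n.choose m) := by
  have h := Nat.choose_succ_right_eq n m
  have h' : (((n + 1 - 1 - m) * (m + 1) : ℕ) : ℝ) * (n.choose (m + 1) : ℝ)
      = ((n - m : ℕ) : ℝ) ^ 2 * (n.choose m : ℝ) := by
    rw [Nat.add_sub_cancel]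
    have h2 : (n.choose (m + 1) : ℝ) * ((m + 1 : ℕ) : ℝ) = (n.choose m : ℝ) * ((n - m : ℕ) : ℝ) := by
      exact_mod_cast h
    rw [Nat.cast_mul]
    linear_combination ((n - m : ℕ) : ℝ) * h2
  rw [gCoup, ← Real.sqrt_mul (Nat.cast_nonneg _), h', Real.sqrt_mul (sq_nonneg _),
    Real.sqrt_sq (Nat.cast_nonneg _)]

/-- Coupling to the previous level after the rescaling by `C`. -/
lemma gCoup_mul_sqrt_choose (n m : ℕ) :
    gCoup (n + 1) m * Real.sqrt (n.choose m) = ((m + 1 : ℕ) : ℝ) * Real.sqrt (n.choose (m + 1)) := by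
  have h := Nat.choose_succ_right_eq n m
  have h' : (((n + 1 - 1 - m) * (m + 1) : ℕ) : ℝ) * (n.choose m : ℝ)
      = ((m + 1 : ℕ) : ℝ) ^ 2 * (n.choose (m + 1) : ℝ) := by
    rw [Nat.add_sub_cancel]
    have h2 : (n.choose (m + 1) : ℝ) * ((m + 1 : ℕ) : ℝ) = (n.choose m : ℝ) * ((n - m : ℕ) : ℝ) := by
      exact_mod_cast h
    rw [Nat.cast_mul]
    linear_combination -((m + 1 : ℕ) : ℝ) * h2
  rw [gCoup, ← Real.sqrt_mul (Nat.cast_nonneg _), h', Real.sqrt_mul (sq_nonneg _),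
    Real.sqrt_sq (Nat.cast_nonneg _)]

/-- The tridiagonal action of `H_AO` on a vector given by a function on `ℕ`. The coupling
`gCoup (n + 1) n` is zero, so the out-of-range value `v (n + 1)` does not contribute. -/
lemma HAO_sum (n : ℕ) (k : Fin (n + 1)) (v : ℕ → ℂ) :
    ∑ l : Fin (n + 1), HAO (n + 1) k l * v l =
      -((n : ℂ) - 2 * (k : ℕ)) * v k + (gCoup (n + 1) k : ℂ) * v (k + 1)
        - (if (k : ℕ) = 0 then 0 else (gCoup (n + 1) (k - 1) : ℂ) * v (k - 1)) := by
  obtain ⟨k, hk⟩ := k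
  have hsplit : ∀ l : Fin (n + 1), HAO (n + 1) ⟨k, hk⟩ l * v l =
      (if k = (l : ℕ) then -((n : ℂ) - 2 * k) * v k else 0)
      + (if k + 1 = (l : ℕ) then (gCoup (n + 1) k : ℂ) * v (k + 1) else 0)
      - (if k = (l : ℕ) + 1 then (gCoup (n + 1) (k - 1) : ℂ) * v (k - 1) else 0) := by
    rintro ⟨l, hl⟩
    simp only [HAO]
    rcases eq_or_ne k l with rfl | h1
    · simp
    rcases eq_or_ne l (k + 1) with rfl | h2
    · simp [show ¬ k = k + 1 + 1 by omega]
    rcases eq_or_ne k (l + 1) with rfl | h3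
    · simp [show ¬ l = l + 1 + 1 by omega, show ¬ l + 1 + 1 = l by omega]
    simp [h1, h2, h2.symm, h3]
  rw [Finset.sum_congr rfl fun l _ => hsplit l, Finset.sum_sub_distrib, Finset.sum_add_distrib,
    Fin.sum_univ_eq_sum_range (fun l => if k = l then -((n : ℂ) - 2 * k) * v k else 0),
    Fin.sum_univ_eq_sum_range
      (fun l => if k + 1 = l then (gCoup (n + 1) k : ℂ) * v (k + 1) else 0),
    Fin.sum_univ_eq_sum_range
      (fun l => if k = l + 1 then (gCoup (n + 1) (k - 1) : ℂ) * v (k - 1) else 0),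
    Finset.sum_ite_eq, Finset.sum_ite_eq, if_pos (Finset.mem_range.2 hk)]
  congr 1
  · congr 1
    split_ifs with h
    · rfl
    · have : k = n := by simp at h; omega
      subst this
      simp [gCoup]
  · rcases k with _ | k
    · simp
    · have : k < n + 1 := by omega
      simp [this]

/-- The binomial identity behind the intertwining relation, in a column `q + 1`. -/
lemma pascal_three_term (a m q : ℕ) :
    -((a : ℂ) - m) * (a.choose (q + 1) : ℂ) + a * ((a - 1).choose (q + 1) : ℂ)
      - m * ((a + 1).choose (q + 1) : ℂ) = -((a : ℂ) + m - q) * (a.choose q : ℂ) := by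
  have h1 : ((a + 1).choose (q + 1) : ℂ) = a.choose q + a.choose (q + 1) := by
    exact_mod_cast Nat.choose_succ_succ a q
  rcases a with _ | b
  · rcases q with _ | q <;> simp [Nat.choose_eq_zero_of_lt]
  · have h2 : ((b + 1).choose (q + 1) : ℂ) = b.choose q + b.choose (q + 1) := by
      exact_mod_cast Nat.choose_succ_succ b q
    have h3 : ((b : ℂ) + 1) * b.choose q = (b + 1).choose (q + 1) * (q + 1) := by
      exact_mod_cast Nat.add_one_mul_choose_eq b q
    have h4 : ((b + 1 + 1 : ℕ) : ℂ) * (b + 1).choose q = (b + 1 + 1).choose (q + 1) * (q + 1) := by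
      exact_mod_cast Nat.add_one_mul_choose_eq (b + 1) q
    rw [h1] at h4 ⊢
    push_cast at h4 ⊢
    linear_combination (-(b : ℂ) - 1) * h2 - h3 + h4

lemma QAO_apply (n : ℕ) (m q : Fin (n + 1)) :
    QAO (n + 1) m q = (Real.sqrt (n.choose m) : ℂ) * ((n - m : ℕ).choose q : ℂ)
      * ((-1 : ℂ) ^ (n - q : ℕ) * ((n - q : ℕ).factorial : ℂ)) := by
  simp [QAO, Cmat, Fmat, Pmat, Matrix.mul_diagonal, Matrix.diagonal_mul]

lemma isUnit_Pmat (n : ℕ) : IsUnit (Pmat (n + 1)) := by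
  rw [← Matrix.isUnit_submatrix_equiv (A := Pmat (n + 1)) Fin.revPerm (Equiv.refl _),
    Matrix.isUnit_iff_isUnit_det, Matrix.det_of_isLowerTriangular]
  · have h : ∀ i : Fin (n + 1), n - (n - (i : ℕ)) = i := fun i => by omega
    simp [Pmat, h]
  · intro i j hij
    have hij' : (i : ℕ) < j := by simpa using hij
    have h : n - (n - (i : ℕ)) = i := by omega
    simp [Pmat, h, Nat.choose_eq_zero_of_lt hij']

lemma isUnit_QAO (n : ℕ) : IsUnit (QAO (n + 1)) := by
  refine IsUnit.mul (IsUnit.mul ?_ (isUnit_Pmat n)) ?_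
  · rw [Cmat, Matrix.isUnit_diagonal, Pi.isUnit_iff]
    intro k
    have h : 0 < n.choose (k : ℕ) := Nat.choose_pos (by omega)
    have h' : Real.sqrt (n.choose (k : ℕ)) ≠ 0 := by positivity
    simpa using h'
  · rw [Fmat, Matrix.isUnit_diagonal, Pi.isUnit_iff]
    intro k
    simp [Nat.factorial_ne_zero]

lemma HAO_mul_QAO (n : ℕ) : HAO (n + 1) * QAO (n + 1) = QAO (n + 1) * Jmat (n + 1) := by
  ext k q
  rw [Matrix.mul_apply, Matrix.mul_apply]
  simp only [QAO_apply]
  rw [HAO_sum n k (fun l => (Real.sqrt (n.choose l) : ℂ) * ((n - l : ℕ).choose q : ℂ)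
      * ((-1 : ℂ) ^ (n - q : ℕ) * ((n - q : ℕ).factorial : ℂ)))]
  obtain ⟨k, hk⟩ := k
  obtain ⟨q, hq⟩ := q
  simp only []
  have hup : (gCoup (n + 1) k : ℂ) * (Real.sqrt (n.choose (k + 1)) : ℂ)
      = ((n - k : ℕ) : ℂ) * (Real.sqrt (n.choose k) : ℂ) := by
    exact_mod_cast gCoup_mul_sqrt_choose_succ n k
  -- Writing `a = n - k`, the previous row of `P` is the row of binomials of `a + 1`.
  have hdown : (if k = 0 then 0 else (gCoup (n + 1) (k - 1) : ℂ) *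
      ((Real.sqrt (n.choose (k - 1)) : ℂ) * ((n - (k - 1) : ℕ).choose q : ℂ)
      * ((-1 : ℂ) ^ (n - q : ℕ) * ((n - q : ℕ).factorial : ℂ))))
      = (k : ℂ) * (Real.sqrt (n.choose k) : ℂ) * ((n - k + 1 : ℕ).choose q : ℂ)
      * ((-1 : ℂ) ^ (n - q : ℕ) * ((n - q : ℕ).factorial : ℂ)) := by
    rcases k with _ | j
    · simp
    · have h : (gCoup (n + 1) j : ℂ) * (Real.sqrt (n.choose j) : ℂ)
          = ((j + 1 : ℕ) : ℂ) * (Real.sqrt (n.choose (j + 1)) : ℂ) := by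
        exact_mod_cast gCoup_mul_sqrt_choose n j
      have e : n - j = n - (j + 1) + 1 := by omega
      rw [if_neg (Nat.succ_ne_zero j), Nat.add_sub_cancel, ← h, ← e]
      ring
  rw [hdown, Nat.sub_add_eq n k 1]
  obtain ⟨a, rfl⟩ : ∃ a, n = k + a := ⟨n - k, by omega⟩
  simp only [Nat.add_sub_cancel_left] at hup ⊢
  rcases q with _ | q
  · simp only [Jmat, Nat.choose_zero_right]
    rw [Finset.sum_eq_zero fun l _ => by simp]
    push_cast
    linear_combination ((-1 : ℂ) ^ (k + a - 0) * ((k + a - 0).factorial : ℂ)) * hup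
  · rw [Finset.sum_eq_single (⟨q, by omega⟩ : Fin (k + a + 1))]
    · obtain ⟨r, hr⟩ : ∃ r, k + a = q + r + 1 := ⟨k + a - q - 1, by omega⟩
      have e1 : k + a - (q + 1) = r := by omega
      have e2 : k + a - q = r + 1 := by omega
      have hr' : (k : ℂ) + a = q + r + 1 := by exact_mod_cast hr
      have hp := pascal_three_term a k q
      have hfac : ((a : ℂ) + k - q) = r + 1 := by linear_combination hr'
      rw [hfac] at hp
      simp only [Jmat, e1, e2, pow_succ, Nat.factorial_succ]
      push_cast
      simp only [mul_one]
      linear_combination ((a - 1).choose (q + 1) : ℂ) * ((-1 : ℂ) ^ r * (r.factorial : ℂ)) * hup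
        + (Real.sqrt ((k + a).choose k) : ℂ) * ((-1 : ℂ) ^ r * (r.factorial : ℂ)) * hp
    · rintro ⟨l, hl⟩ - hne
      have : q ≠ l := fun h => hne (by simp [h])
      simp [Jmat, this]
    · simp

/-- `Q_AO⁻¹ · H_AO · Q_AO = J`. -/
theorem ao_jordan_form (N : ℕ) (hN : 1 ≤ N) :
    (QAO N)⁻¹ * HAO N * QAO N = Jmat N := by
  obtain ⟨n, rfl⟩ : ∃ n, N = n + 1 := ⟨N - 1, by omega⟩
  have hdet := (Matrix.isUnit_iff_isUnit_det _).1 (isUnit_QAO n)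
  rw [Matrix.mul_assoc, HAO_mul_QAO, ← Matrix.mul_assoc, Matrix.nonsing_inv_mul _ hdet,
    Matrix.one_mul]
end

section
/- For every integer N ≥ 1, the identity S·Q_BH = Q_AO holds; equivalently, since Q_BH is invertible, the transition-matrix product Q_AO·Q_BH⁻¹ equals the explicit closed-form matrix S = B·R·A. -/
/-!
Write `M = N - 1`. The trinomial revision `C(M,k) C(k,n) = C(M,n) C(M-n,k-n)` turns the product of
square roots coming from `R` and `D` into `√C(M,n) · C(M-n,k-n)` (`sqrt_choose_mul`). With
`L = M - n` and `j = k - n`, the `(n,q)` entry of `S · Q_BH` then reduces to the sum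
`∑ j, C(L,j) C(L-j,q) x^j = C(L,q) (1+x)^(L-q)` (`sum_choose_mul_choose`) at `x = β i = -1 - i`,
where `1 + x = -i`; collecting powers of `-i` gives the entry of `Q_AO`.

The second identity needs `Q_BH` to be invertible: `D` and `G` are diagonal with nonzero entries,
and `P` with its rows reversed is lower triangular with unit diagonal.
-/

open Matrix Polynomial Finset

theorem choose_mul_choose_sub (L q j : ℕ) (hj : j ≤ L) :
    L.choose j * (L - j).choose q = L.choose q * (L - q).choose j := by
  by_cases hq : q ≤ L - j
  · rw [← Nat.choose_symm hj, Nat.choose_mul hq,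
      ← Nat.choose_symm (show j ≤ L - q by omega)]
    congr 2
    omega
  · rw [Nat.choose_eq_zero_of_lt (show L - j < q by omega)]
    by_cases h : q ≤ L
    · rw [Nat.choose_eq_zero_of_lt (show L - q < j by omega)]; simp
    · rw [Nat.choose_eq_zero_of_lt (show L < q by omega)]; simp

theorem sum_choose_mul_choose (L q : ℕ) (x : ℂ) :
    ∑ j ∈ range (L + 1), (L.choose j : ℂ) * ((L - j).choose q : ℂ) * x ^ j
      = (L.choose q : ℂ) * (1 + x) ^ (L - q) := by
  have h1 : ∑ j ∈ range (L + 1), ((L - q).choose j : ℂ) * x ^ j = (1 + x) ^ (L - q) := by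
    rw [add_comm 1 x, add_pow]
    symm
    refine (Finset.sum_subset (Finset.range_mono (show L - q + 1 ≤ L + 1 by omega)) ?_).trans ?_
    · intro j _ hj
      rw [Finset.mem_range, not_lt] at hj
      rw [Nat.choose_eq_zero_of_lt (show L - q < j by omega)]; simp
    · exact Finset.sum_congr rfl fun j _ => by simp [mul_comm]
  rw [← h1, Finset.mul_sum]
  refine Finset.sum_congr rfl fun j hj => ?_
  have h := choose_mul_choose_sub L q j (by rw [Finset.mem_range] at hj; omega)
  rw [← mul_assoc]
  congr 1
  exact_mod_cast h

theorem sqrt_choose_mul (n L j : ℕ) :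
    Real.sqrt (((n + j).choose n : ℝ) * (L.choose j : ℝ)) * Real.sqrt ((n + L).choose (n + j) : ℝ)
      = Real.sqrt ((n + L).choose n : ℝ) * (L.choose j : ℝ) := by
  have h := Nat.choose_mul (n := n + L) (k := n + j) (s := n) (by omega)
  simp only [Nat.add_sub_cancel_left] at h
  have h' : ((n + L).choose (n + j) : ℝ) * ((n + j).choose n : ℝ)
      = ((n + L).choose n : ℝ) * (L.choose j : ℝ) := by exact_mod_cast h
  rw [← Real.sqrt_mul (by positivity),
    show ((n + j).choose n : ℝ) * (L.choose j : ℝ) * ((n + L).choose (n + j) : ℝ)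
      = ((n + L).choose n : ℝ) * ((L.choose j : ℝ) * (L.choose j : ℝ)) by
        linear_combination (L.choose j : ℝ) * h',
    Real.sqrt_mul (by positivity), Real.sqrt_mul_self (by positivity)]

theorem betaC_ne_zero : betaC ≠ 0 := by
  intro h
  have := congrArg Complex.im h
  simp [betaC] at this

theorem one_add_betaC_mul_I : 1 + betaC * Complex.I = -Complex.I := by
  rw [betaC, add_mul, Complex.I_mul_I]; ring

/-- The identity `S·Q_BH = Q_AO` at the entry `(n, q)`, without the factor `(N-1-q)!` that `G` and
`F` share. -/
theorem entry_sum (n L q : ℕ) (hq : q ≤ n + L) :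
    ∑ k ∈ range (n + L + 1), (((-betaC) ^ n)⁻¹ *
        (if n ≤ k then (Real.sqrt ((k.choose n : ℝ) * (L.choose (k - n) : ℝ)) : ℂ) else 0) *
        betaC ^ k) * (Complex.I ^ k * (Real.sqrt ((n + L).choose k : ℝ) : ℂ) *
        ((n + L - k).choose q : ℂ) * (-Complex.I) ^ (n + L - q))
      = (Real.sqrt ((n + L).choose n : ℝ) : ℂ) * (L.choose q : ℂ) * (-1) ^ (n + L - q) := by
  have hb : (-betaC) ^ n ≠ 0 := pow_ne_zero _ (neg_ne_zero.mpr betaC_ne_zero)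
  rw [add_assoc n L 1, Finset.sum_range_add, Finset.sum_eq_zero, zero_add]
  swap
  · intro k hk
    rw [Finset.mem_range] at hk
    rw [if_neg (by omega)]; simp
  have hpow : ((-betaC) ^ n)⁻¹ * (betaC * Complex.I) ^ n = (-Complex.I) ^ n := by
    rw [inv_mul_eq_iff_eq_mul₀ hb, ← mul_pow]; ring
  have hterm : ∀ j ∈ range (L + 1), (((-betaC) ^ n)⁻¹ *
        (if n ≤ n + j then (Real.sqrt (((n + j).choose n : ℝ) * (L.choose (n + j - n) : ℝ)) : ℂ)
          else 0) * betaC ^ (n + j)) * (Complex.I ^ (n + j) *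
        (Real.sqrt ((n + L).choose (n + j) : ℝ) : ℂ) *
        ((n + L - (n + j)).choose q : ℂ) * (-Complex.I) ^ (n + L - q))
      = ((Real.sqrt ((n + L).choose n : ℝ) : ℂ) * (-Complex.I) ^ n * (-Complex.I) ^ (n + L - q)) *
        ((L.choose j : ℂ) * ((L - j).choose q : ℂ) * (betaC * Complex.I) ^ j) := by
    intro j _
    have hs := congrArg (fun r : ℝ => (r : ℂ)) (sqrt_choose_mul n L j)
    simp only [Complex.ofReal_mul, Complex.ofReal_natCast] at hs
    rw [if_pos (by omega), Nat.add_sub_cancel_left, Nat.add_sub_add_left, ← hpow, mul_pow, mul_pow,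
      pow_add, pow_add]
    linear_combination (((-betaC) ^ n)⁻¹ * betaC ^ n * betaC ^ j * Complex.I ^ n * Complex.I ^ j *
      ((L - j).choose q : ℂ) * (-Complex.I) ^ (n + L - q)) * hs
  rw [Finset.sum_congr rfl hterm, ← Finset.mul_sum, sum_choose_mul_choose, one_add_betaC_mul_I]
  by_cases h : q ≤ L
  · have e : (-Complex.I) ^ n * (-Complex.I) ^ (L - q) * (-Complex.I) ^ (n + L - q)
        = (-1) ^ (n + L - q) := by
      rw [← pow_add, show n + (L - q) = n + L - q by omega, ← mul_pow, neg_mul_neg,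
        Complex.I_mul_I]
    rw [← e]; ring
  · rw [Nat.choose_eq_zero_of_lt (show L < q by omega)]; simp

theorem Smat_mul_QBH (N : ℕ) : Smat N * QBH N = QAO N := by
  ext n q
  have hn := n.isLt
  have hq := q.isLt
  obtain ⟨L, hL⟩ : ∃ L, N = n + L + 1 := ⟨N - 1 - n, by omega⟩
  have hM : N - 1 = n + L := by omega
  have hMn : N - 1 - (n : ℕ) = L := by omega
  have key := entry_sum n L q (by omega)
  rw [← hL, ← Fin.sum_univ_eq_sum_range (fun k => (((-betaC) ^ (n : ℕ))⁻¹ *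
        (if (n : ℕ) ≤ k then (Real.sqrt ((k.choose n : ℝ) * (L.choose (k - n) : ℝ)) : ℂ) else 0) *
        betaC ^ k) * (Complex.I ^ k * (Real.sqrt ((n + L).choose k : ℝ) : ℂ) *
        ((n + L - k).choose q : ℂ) * (-Complex.I) ^ (n + L - q))) N] at key
  have h2 := congrArg (· * ((n + L - q : ℕ).factorial : ℂ)) key
  simp only [Finset.sum_mul] at h2
  simp only [Smat, QBH, QAO, Bmat, Amat, Dmat, Gmat, Cmat, Fmat, Matrix.mul_apply (M := _ * _ * _),
    Matrix.mul_diagonal, Matrix.diagonal_mul, Rmat, Pmat, hMn]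
  simp only [hM]
  rw [← mul_assoc, ← h2]
  exact Finset.sum_congr rfl fun k _ => by ring

theorem isUnit_Pmat_s9 (N : ℕ) : IsUnit (Pmat N) := by
  -- reversing the rows makes the matrix `(m, q) ↦ C(m, q)`
  have h : IsUnit ((Pmat N).submatrix Fin.revPerm (Equiv.refl _)) := by
    rw [Matrix.isUnit_iff_isUnit_det, Matrix.det_of_isLowerTriangular]
    · rw [Finset.prod_eq_one]
      · exact isUnit_one
      · intro i _
        have := i.isLt
        simp only [Pmat, Matrix.submatrix_apply, Fin.revPerm_apply, Equiv.refl_apply, Fin.val_rev]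
        rw [show N - 1 - (N - ((i : ℕ) + 1)) = i by omega]; simp
    · intro i j hij
      have hij' : (i : ℕ) < j := hij
      have := i.isLt
      simp only [Pmat, Matrix.submatrix_apply, Fin.revPerm_apply, Equiv.refl_apply, Fin.val_rev]
      rw [Nat.choose_eq_zero_of_lt (by omega)]; simp
  exact (Matrix.isUnit_submatrix_equiv _ _).mp h

theorem isUnit_QBH (N : ℕ) : IsUnit (QBH N) := by
  refine (IsUnit.mul ?_ (isUnit_Pmat_s9 N)).mul ?_
  · rw [Dmat, Matrix.isUnit_diagonal, Pi.isUnit_iff]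
    intro k
    have hk : 0 < (N - 1).choose (k : ℕ) := Nat.choose_pos (by have := k.isLt; omega)
    refine (mul_ne_zero (pow_ne_zero _ Complex.I_ne_zero) ?_).isUnit
    exact_mod_cast (Real.sqrt_pos.mpr (by exact_mod_cast hk)).ne'
  · rw [Gmat, Matrix.isUnit_diagonal, Pi.isUnit_iff]
    intro k
    exact (mul_ne_zero (pow_ne_zero _ (neg_ne_zero.mpr Complex.I_ne_zero))
      (by exact_mod_cast Nat.factorial_ne_zero _)).isUnit

/-- `S·Q_BH = Q_AO`, equivalently `Q_AO·Q_BH⁻¹ = S`. -/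
theorem smat_transition_product (N : ℕ) (hN : 1 ≤ N) :
    Smat N * QBH N = QAO N ∧ QAO N * (QBH N)⁻¹ = Smat N := by
  refine ⟨Smat_mul_QBH N, ?_⟩
  rw [← Smat_mul_QBH, Matrix.mul_assoc,
    Matrix.mul_nonsing_inv _ ((Matrix.isUnit_iff_isUnit_det _).mp (isUnit_QBH N)), Matrix.mul_one]
end
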